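/- Let x ∈ [-1,1], X = {x}, and suppose t = arccos(x)/(2π) is irrational. Then the supremum of λ(I) over all Lebesgue measurable X-avoiding subsets I of the unit circle S^1 equals 1/2; that is, every measurable X-avoiding set has λ(I) ≤ 1/2, and for every ε > 0 there exists a measurable X-avoiding set I ⊆ S^1 with λ(I) > 1/2 − ε. -/

import Mathlib

open MeasureTheory Metric Matrix Filter
open scoped RealInnerProductSpace ENNReal

noncomputable section

/-- `ℝ^n` as a Euclidean space. -/
abbrev Eucl (n : ℕ) : Type := EuclideanSpace ℝ (Fin n)

/-- The unit sphere `S^{n-1}` in `ℝ^n`. -/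
abbrev Sph (n : ℕ) := Metric.sphere (0 : Eucl n) 1

/-- The Lebesgue surface measure on the unit sphere `S^{n-1}`, normalised so that the
total measure of the sphere is `1`. -/
def sphMeasure (n : ℕ) : Measure (Sph n) :=
  (((volume : Measure (Eucl n)).toSphere) Set.univ)⁻¹ • (volume : Measure (Eucl n)).toSphere

/-- A subset `I` of the sphere is `X`-avoiding if `⟪ξ, η⟫ ∉ X` for all `ξ, η ∈ I`. -/
def Avoids {n : ℕ} (X : Set ℝ) (I : Set (Sph n)) : Prop :=
  ∀ ξ ∈ I, ∀ η ∈ I, ⟪(ξ : Eucl n), (η : Eucl n)⟫ ∉ X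


instance circMS : MeasurableSpace Circle := borel Circle
instance circBS : BorelSpace Circle := ⟨rfl⟩

lemma circ_cont : Continuous (fun z : Circle => (z : ℂ)) := continuous_subtype_val

instance sphMeasure_prob : IsProbabilityMeasure (sphMeasure 2) := by
  constructor
  have h0 : (volume : Measure (Eucl 2)).toSphere Set.univ ≠ 0 := by
    rw [Ne, Measure.measure_univ_eq_zero]
    exact Measure.toSphere_ne_zero _
  rw [sphMeasure, Measure.smul_apply, smul_eq_mul]
  exact ENNReal.inv_mul_cancel h0 (measure_ne_top _ _)

open scoped Pointwise in
/-- Isometries preserve the measure on the sphere. -/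
lemma sphMeasure_preimage (L : Eucl 2 ≃ₗᵢ[ℝ] Eucl 2) (f : Sph 2 → Sph 2) (hf : Continuous f)
    (hL : ∀ ξ, (f ξ : Eucl 2) = L ξ) (s : Set (Sph 2)) (hs : MeasurableSet s) :
    sphMeasure 2 (f ⁻¹' s) = sphMeasure 2 s := by
  have key : (Set.Ioo (0 : ℝ) 1 • ((↑) '' (f ⁻¹' s) : Set (Eucl 2))) =
      L ⁻¹' (Set.Ioo (0 : ℝ) 1 • ((↑) '' s : Set (Eucl 2))) := by
    ext v
    simp only [Set.mem_smul, Set.mem_image, Set.mem_preimage]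
    constructor
    · rintro ⟨r, hr, _, ⟨ξ, hξ, rfl⟩, rfl⟩
      exact ⟨r, hr, _, ⟨f ξ, hξ, rfl⟩, by rw [hL, map_smul]⟩
    · rintro ⟨r, hr, _, ⟨ξ, hξ, rfl⟩, h⟩
      have hm : L.symm ξ ∈ Metric.sphere (0 : Eucl 2) 1 := by
        have := ξ.2
        simp only [mem_sphere_iff_norm, sub_zero] at this ⊢
        rw [L.symm.norm_map, this]
      refine ⟨r, hr, L.symm ξ, ⟨⟨L.symm ξ, hm⟩, ?_, rfl⟩, ?_⟩
      · have : f ⟨L.symm ξ, hm⟩ = ξ := Subtype.ext (by rw [hL]; simp)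
        rwa [this]
      · apply L.injective
        rw [← h, map_smul]; simp
  simp only [sphMeasure, Measure.smul_apply]
  rw [Measure.toSphere_apply' _ hs, Measure.toSphere_apply' _ (hf.measurable hs), key]
  congr 2
  exact L.measurePreserving.measure_preimage_equiv (f := L.toMeasurableEquiv) _

/-- The identification of the plane with the complex numbers. -/
def cE : ℂ ≃ₗᵢ[ℝ] Eucl 2 := Complex.orthonormalBasisOneI.repr

/-- From the sphere in the plane to the circle group. -/
def toC (ξ : Sph 2) : Circle := ⟨cE.symm ξ, by
  refine mem_sphere_zero_iff_norm.2 ?_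
  rw [cE.symm.norm_map]; exact mem_sphere_zero_iff_norm.1 ξ.2⟩

/-- From the circle group to the sphere in the plane. -/
def ofC (z : Circle) : Sph 2 := ⟨cE z, by
  rw [mem_sphere_zero_iff_norm, cE.norm_map]; exact z.norm_coe⟩

lemma toC_coe (ξ : Sph 2) : (toC ξ : ℂ) = cE.symm ξ := rfl
lemma ofC_coe (z : Circle) : (ofC z : Eucl 2) = cE z := rfl
lemma toC_ofC (z : Circle) : toC (ofC z) = z := by
  apply Circle.ext; rw [toC_coe, ofC_coe]; simp
lemma ofC_toC (z : Sph 2) : ofC (toC z) = z := by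
  apply Subtype.ext; rw [ofC_coe, toC_coe]; simp
lemma continuous_toC : Continuous toC :=
  Continuous.subtype_mk (cE.symm.continuous.comp continuous_subtype_val) _
lemma continuous_ofC : Continuous ofC :=
  Continuous.subtype_mk (cE.continuous.comp circ_cont) _

lemma inner_ofC (z w : Circle) : ⟪(ofC z : Eucl 2), (ofC w : Eucl 2)⟫ = ((w / z : Circle) : ℂ).re := by
  rw [ofC_coe, ofC_coe, cE.inner_map_map, Complex.inner, div_eq_mul_inv, Circle.coe_mul,
    Circle.coe_inv_eq_conj]

/-- The measure on the circle group. -/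
def nu : Measure Circle := (sphMeasure 2).map toC

lemma nu_apply {s : Set Circle} (hs : MeasurableSet s) : nu s = sphMeasure 2 (toC ⁻¹' s) :=
  Measure.map_apply continuous_toC.measurable hs

instance nu_prob : IsProbabilityMeasure nu :=
  Measure.isProbabilityMeasure_map continuous_toC.measurable.aemeasurable

instance nu_inv : nu.IsMulLeftInvariant := by
  constructor
  intro u
  ext s hs
  rw [Measure.map_apply (measurable_const_mul u) hs, nu_apply (measurable_const_mul u hs),
    nu_apply hs]
  rw [← sphMeasure_preimage (cE.symm.trans ((rotation u).trans cE)) (fun ξ => ofC (u * toC ξ))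
    (continuous_ofC.comp (continuous_const.mul continuous_toC)) (fun ξ => by
      rw [ofC_coe, Circle.coe_mul, toC_coe]; simp) (toC ⁻¹' s) (continuous_toC.measurable hs)]
  congr 1
  ext ξ
  simp [toC_ofC]

instance nu_haar : nu.IsHaarMeasure :=
  Measure.isHaarMeasure_of_isCompact_nonempty_interior nu Set.univ isCompact_univ
    (by rw [interior_univ]; exact Set.univ_nonempty)
    (by simp) (by simp)

lemma nu_upper (x : ℝ) (hx : x ∈ Set.Icc (-1 : ℝ) 1) (I : Set (Sph 2)) (hI : MeasurableSet I)
    (hA : Avoids {x} I) : sphMeasure 2 I ≤ 1 / 2 := by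
  set J : Set Circle := ofC ⁻¹' I with hJ
  have hJm : MeasurableSet J := continuous_ofC.measurable hI
  have e1 : sphMeasure 2 I = nu J := by
    rw [nu_apply hJm]; congr 1; ext ξ; simp [hJ, ofC_toC]
  set u := Circle.exp (Real.arccos x)
  have hu : (u : ℂ).re = x := by
    rw [Circle.coe_exp, Complex.exp_ofReal_mul_I_re, Real.cos_arccos hx.1 hx.2]
  have e2 : nu ((fun z => u * z) ⁻¹' J) = nu J := measure_preimage_mul nu u J
  have hd : Disjoint J ((fun z => u * z) ⁻¹' J) := by
    rw [Set.disjoint_left]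
    intro z hz hz'
    apply hA _ hz _ hz'
    rw [inner_ofC]
    simp [hu]
  have e3 : nu J + nu J ≤ 1 := by
    nth_rewrite 2 [← e2]
    rw [← measure_union hd (measurable_const_mul u hJm)]
    exact prob_le_one
  rw [e1, ENNReal.le_div_iff_mul_le (by simp) (by simp), mul_two]
  exact e3

lemma exists_zpow_near (θ : ℝ) (hirr : Irrational (θ / (2 * Real.pi))) (c : ℝ) (hc : 0 < c) :
    ∃ m : ℤ, ‖((Circle.exp θ ^ m : Circle) : ℂ) + 1‖ < c := by
  have hd := dense_addSubgroupClosure_pair_iff.2 hirr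
  have ho : IsOpen {y : ℝ | ‖((Circle.exp y : Circle) : ℂ) + 1‖ < c} := by
    apply isOpen_lt _ continuous_const
    exact ((circ_cont.comp Circle.exp.continuous).add continuous_const).norm
  obtain ⟨y, hyc, hy⟩ := hd.exists_mem_open ho ⟨Real.pi, by simpa using hc⟩
  obtain ⟨m, k, rfl⟩ := AddSubgroup.mem_closure_pair.1 hyc
  refine ⟨m, ?_⟩
  have : Circle.exp (m • θ + k • (2 * Real.pi)) = Circle.exp θ ^ m := by
    rw [Circle.exp_add, Circle.exp_zsmul, Circle.exp_zsmul, Circle.exp_two_pi, _root_.one_zpow, mul_one]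
  rw [← this]; exact hy

lemma zpow_preserving (m : ℤ) (hm : m ≠ 0) : MeasurePreserving (fun z : Circle => z ^ m) nu nu := by
  apply MonoidHom.measurePreserving (f := zpowGroupHom m) (μ := nu) (ν := nu) _ _ rfl
  · exact continuous_zpow m
  · intro z
    obtain ⟨t, rfl⟩ := Circle.exp_surjective z
    refine ⟨Circle.exp (t / m), ?_⟩
    rw [zpowGroupHom_apply, ← Circle.exp_zsmul, zsmul_eq_mul]
    congr 1
    field_simp

/-- The open cap of height `c`. -/
def cap (c : ℝ) : Set Circle := {z | c < (z : ℂ).im}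

lemma cap_meas (c : ℝ) : MeasurableSet (cap c) :=
  (isOpen_lt (α := ℝ) (β := Circle) continuous_const
    (Complex.continuous_im.comp circ_cont)).measurableSet

lemma cap_zero : 1 / 2 ≤ nu (cap 0) := by
  have h1 : nu ((fun z => (-1 : Circle) * z) ⁻¹' cap 0) = nu (cap 0) := measure_preimage_mul nu _ _
  have : (nhdsWithin (1 : Circle) {1}ᶜ).NeBot := by
    have : Nontrivial Circle := ⟨⟨-1, 1, Circle.neg_ne_self 1⟩⟩
    exact ConnectedSpace.neBot_nhdsWithin_compl_of_nontrivial_of_t1space _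
  have h0 : nu {1, -1} = 0 := by
    apply Set.Finite.measure_zero; simp
  have hcov : (Set.univ : Set Circle) ⊆
      cap 0 ∪ ((fun z => (-1 : Circle) * z) ⁻¹' cap 0) ∪ {1, -1} := by
    intro z _
    rcases lt_trichotomy (z : ℂ).im 0 with h | h | h
    · left; right; simpa [cap] using h
    · right
      have hz : Complex.normSq z = 1 := z.normSq_coe
      rw [Complex.normSq_apply, h] at hz
      have hz' : ((z : ℂ).re - 1) * ((z : ℂ).re + 1) = 0 := by linarith
      rcases mul_eq_zero.1 hz' with h' | h'
      · left; apply Circle.ext; apply Complex.ext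
        · simp; linarith
        · simpa using h
      · right; apply Circle.ext; apply Complex.ext
        · simp; linarith
        · simpa using h
    · left; left; exact h
  have := (measure_mono (μ := nu) hcov).trans ((measure_union_le _ _).trans
    (add_le_add_left (measure_union_le _ _) _))
  rw [h0, h1, measure_univ, add_zero] at this
  rw [ENNReal.div_le_iff_le_mul (by simp) (by simp), mul_two]
  exact this

lemma exists_cap (ε : ℝ≥0∞) (hε : 0 < ε) : ∃ c : ℝ, 0 < c ∧ 1 / 2 - ε < nu (cap c) := by
  have hU : cap 0 = ⋃ n : ℕ, cap (1 / ((n : ℝ) + 1)) := by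
    ext z
    simp only [cap, Set.mem_iUnion, Set.mem_ofPred_eq]
    constructor
    · exact fun h => exists_nat_one_div_lt h
    · rintro ⟨n, hn⟩
      exact lt_trans (by positivity) hn
  have hmono : Monotone fun n : ℕ => cap (1 / ((n : ℝ) + 1)) := by
    intro a b hab z hz
    exact lt_of_le_of_lt (Nat.one_div_le_one_div hab) (show _ < (z : ℂ).im from hz)
  have hlt : 1 / 2 - ε < nu (cap 0) := by
    refine lt_of_lt_of_le (ENNReal.sub_lt_self (by simp) (by simp) hε.ne') cap_zero
  rw [hU, hmono.measure_iUnion] at hlt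
  obtain ⟨n, hn⟩ := lt_iSup_iff.1 hlt
  exact ⟨_, by positivity, hn⟩

/-- If `x ∈ [-1,1]` and `t = arccos x / (2π)` is irrational, then the supremum of the
normalised measures of measurable `{x}`-avoiding subsets of the unit circle `S^1` equals
`1/2`: every measurable `{x}`-avoiding set has measure at most `1/2`, and for every `ε > 0`
there is a measurable `{x}`-avoiding set of measure greater than `1/2 - ε`. -/
theorem circle_sup_irrational (x : ℝ) (hx : x ∈ Set.Icc (-1 : ℝ) 1)
    (hirr : Irrational (Real.arccos x / (2 * Real.pi))) :
    (∀ I : Set (Sph 2), MeasurableSet I → Avoids {x} I → sphMeasure 2 I ≤ 1 / 2) ∧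
    (∀ ε : ℝ≥0∞, 0 < ε → ∃ I : Set (Sph 2),
      MeasurableSet I ∧ Avoids {x} I ∧ 1 / 2 - ε < sphMeasure 2 I) := by
  refine ⟨nu_upper x hx, ?_⟩
  intro ε hε
  obtain ⟨c, hc, hcε⟩ := exists_cap ε hε
  obtain ⟨m, hm⟩ := exists_zpow_near _ hirr (min c 1) (lt_min hc one_pos)
  have hm0 : m ≠ 0 := by
    rintro rfl
    have := hm.trans_le (min_le_right _ _)
    norm_num at this
  set u := Circle.exp (Real.arccos x) with hu
  have hmc := hm.trans_le (min_le_left _ _)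
  -- a pair of points of the pulled back cap never differs by the rotation `u`
  have key : ∀ z : Circle, c < ((z ^ m : Circle) : ℂ).im →
      c < (((u * z) ^ m : Circle) : ℂ).im → False := by
    intro z h1 h2
    have e : (((u * z) ^ m : Circle) : ℂ) =
        -((z ^ m : Circle) : ℂ) + (((u ^ m : Circle) : ℂ) + 1) * ((z ^ m : Circle) : ℂ) := by
      rw [mul_zpow, Circle.coe_mul]; ring
    have b : ((((u ^ m : Circle) : ℂ) + 1) * ((z ^ m : Circle) : ℂ)).im < c := by
      refine lt_of_le_of_lt ((le_abs_self _).trans (Complex.abs_im_le_norm _)) ?_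
      rw [norm_mul, Circle.norm_coe, mul_one]
      exact hmc
    rw [e, Complex.add_im, Complex.neg_im] at h2
    linarith
  have hmeas : MeasurableSet ((fun z : Circle => z ^ m) ⁻¹' cap c) :=
    (zpow_preserving m hm0).measurable (cap_meas c)
  refine ⟨toC ⁻¹' ((fun z : Circle => z ^ m) ⁻¹' cap c), continuous_toC.measurable hmeas, ?_, ?_⟩
  · intro ξ hξ η hη hin
    have hin' : ⟪(ξ : Eucl 2), (η : Eucl 2)⟫ = x := hin
    rw [← ofC_toC ξ, ← ofC_toC η, inner_ofC] at hin'
    have hξ' : c < ((toC ξ ^ m : Circle) : ℂ).im := hξ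
    have hη' : c < ((toC η ^ m : Circle) : ℂ).im := hη
    obtain ⟨t, ht⟩ : ∃ t, t = toC η / toC ξ := ⟨_, rfl⟩
    rw [← ht] at hin'
    have hur : (u : ℂ).re = x := by
      rw [hu, Circle.coe_exp, Complex.exp_ofReal_mul_I_re, Real.cos_arccos hx.1 hx.2]
    have n1 : Complex.normSq t = 1 := t.normSq_coe
    have n2 : Complex.normSq u = 1 := u.normSq_coe
    rw [Complex.normSq_apply] at n1 n2
    have him : ((t : ℂ).im - (u : ℂ).im) * ((t : ℂ).im + (u : ℂ).im) = 0 := by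
      rw [hin'] at n1; rw [hur] at n2; linarith
    rcases mul_eq_zero.1 him with h | h
    · have : t = u := Circle.ext (Complex.ext (by rw [hin', hur]) (by linarith))
      refine key (toC ξ) hξ' ?_
      rwa [← this, ht, div_mul_cancel]
    · have : t⁻¹ = u := by
        apply Circle.ext
        rw [Circle.coe_inv_eq_conj]
        exact Complex.ext (by simp [hin', hur]) (by simp; linarith)
      refine key (toC η) hη' ?_
      rwa [← this, ht, inv_div, div_mul_cancel]
  · rw [← nu_apply hmeas, (zpow_preserving m hm0).measure_preimage (cap_meas c).nullMeasurableSet]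
    exact hcε
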